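/- Consider an MDP congestion game whose cost vector ξ is continuously differentiable on a convex open set U containing D = ∏_i 𝒳(P^i, z₀^i) with Dξ(x) symmetric positive definite for every x ∈ U, and let F : U → ℝ be a potential function, i.e., ∂F/∂x^i(t,s,a)(x) = ℓ^i(t,s,a)(x) for all x ∈ U and all (i,t,s,a). Then x̂ ∈ D is a global minimizer of F over D if and only if x̂ is a Nash equilibrium of the game. -/

import Mathlib

open Finset

/-- The feasible set 𝒳(P, z₀) of state-action distributions. -/
def Feas {S A : Type*} [Fintype S] [Fintype A] (T : ℕ)
    (P : Fin (T+1) → S → S → A → ℝ) (z0 : S → ℝ) :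
    Set (Fin (T+1) → S → A → ℝ) :=
  {x | (∀ t s a, 0 ≤ x t s a) ∧
    (∀ s, ∑ a, x 0 s a = z0 s) ∧
    ∀ (t : ℕ) (ht : t < T), ∀ s,
      ∑ s', ∑ a, P ⟨t+1, by omega⟩ s s' a * x ⟨t, by omega⟩ s' a
        = ∑ a, x ⟨t+1, by omega⟩ s a}

/-- `P` is a transition kernel: nonnegative, and column-stochastic for t ∈ {1,…,T}. -/
def IsKernel {S A : Type*} [Fintype S] (T : ℕ)
    (P : Fin (T+1) → S → S → A → ℝ) : Prop :=
  (∀ t s' s a, 0 ≤ P t s' s a) ∧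
    ∀ t : Fin (T+1), t ≠ 0 → ∀ s a, ∑ s', P t s' s a = 1

/-- Backwards recursion for Q-values: `Qaux T P c k` is the Q-value at time T - k. -/
noncomputable def Qaux {S A : Type*} [Fintype S] [Fintype A] [Nonempty A] (T : ℕ)
    (P : Fin (T+1) → S → S → A → ℝ) (c : Fin (T+1) → S → A → ℝ) : ℕ → S → A → ℝ
  | 0, s, a => c (Fin.last T) s a
  | k+1, s, a =>
    c ⟨T - (k+1), by omega⟩ s a +
      ∑ s', P ⟨T - k, by omega⟩ s' s a *
        Finset.univ.inf' Finset.univ_nonempty (Qaux T P c k s')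

/-- Q-values: `Q(T,s,a) = c(T,s,a)`,
`Q(t-1,s,a) = c(t-1,s,a) + ∑_{s'} P(t,s',s,a) · min_{a'} Q(t,s',a')`. -/
noncomputable def Qval {S A : Type*} [Fintype S] [Fintype A] [Nonempty A] (T : ℕ)
    (P : Fin (T+1) → S → S → A → ℝ) (c : Fin (T+1) → S → A → ℝ)
    (t : Fin (T+1)) : S → A → ℝ :=
  Qaux T P c (T - t.1)

/-- x satisfies the Bellman condition for costs c:
every state-action pair played with positive probability achieves the minimal Q-value. -/
def BellmanCond {S A : Type*} [Fintype S] [Fintype A] [Nonempty A] (T : ℕ)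
    (P : Fin (T+1) → S → S → A → ℝ) (c : Fin (T+1) → S → A → ℝ)
    (x : Fin (T+1) → S → A → ℝ) : Prop :=
  ∀ t s a, 0 < x t s a →
    Qval T P c t s a = Finset.univ.inf' Finset.univ_nonempty (Qval T P c t s)

/-- Standard basis vector of the space of state-action functions. -/
def eb {S A : Type*} [DecidableEq S] [DecidableEq A] (T : ℕ)
    (t : Fin (T+1)) (s : S) (a : A) : Fin (T+1) → S → A → ℝ :=
  fun t' s' a' => if t' = t ∧ s' = s ∧ a' = a then 1 else 0

/-- Standard basis vector of the joint (N-player) space. -/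
def ebN {S A : Type*} [DecidableEq S] [DecidableEq A] (N T : ℕ)
    (i : Fin N) (t : Fin (T+1)) (s : S) (a : A) :
    Fin N → Fin (T+1) → S → A → ℝ :=
  fun j => if j = i then eb T t s a else 0

lemma Qval_last {S A : Type*} [Fintype S] [Fintype A] [Nonempty A] (T : ℕ)
    (P : Fin (T+1) → S → S → A → ℝ) (c : Fin (T+1) → S → A → ℝ) (s : S) (a : A) :
    Qval T P c (Fin.last T) s a = c (Fin.last T) s a := by
  simp [Qval, Qaux]

lemma Qval_castSucc {S A : Type*} [Fintype S] [Fintype A] [Nonempty A] (T : ℕ)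
    (P : Fin (T+1) → S → S → A → ℝ) (c : Fin (T+1) → S → A → ℝ) (t : Fin T) (s : S) (a : A) :
    Qval T P c t.castSucc s a = c t.castSucc s a + ∑ s', P t.succ s' s a *
      Finset.univ.inf' Finset.univ_nonempty (Qval T P c t.succ s') := by
  obtain ⟨t, ht⟩ := t
  obtain ⟨k, rfl⟩ : ∃ k, T = t + (k + 1) := ⟨T - t - 1, by omega⟩
  have e1 : t + (k+1) - (Fin.castSucc ⟨t, ht⟩ : Fin (t + (k+1) + 1)).1 = k + 1 := by
    simp
  have e2 : t + (k+1) - (Fin.succ ⟨t, ht⟩ : Fin (t + (k+1) + 1)).1 = k := by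
    simp only [Fin.succ_mk]; omega
  unfold Qval
  rw [e1, e2, Qaux]
  have e3 : (⟨t + (k+1) - (k+1), by omega⟩ : Fin (t + (k+1) + 1)) = Fin.castSucc ⟨t, ht⟩ := by
    ext; simp
  have e4 : (⟨t + (k+1) - k, by omega⟩ : Fin (t + (k+1) + 1)) = Fin.succ ⟨t, ht⟩ := by
    ext; simp only [Fin.succ_mk]; omega
  rw [e3, e4]

/-- State value function. -/
noncomputable def Vval {S A : Type*} [Fintype S] [Fintype A] [Nonempty A] (T : ℕ)
    (P : Fin (T+1) → S → S → A → ℝ) (c : Fin (T+1) → S → A → ℝ)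
    (t : Fin (T+1)) (s : S) : ℝ :=
  Finset.univ.inf' Finset.univ_nonempty (Qval T P c t s)

lemma cost_identity {S A : Type*} [Fintype S] [Fintype A] [Nonempty A] (T : ℕ)
    (P : Fin (T+1) → S → S → A → ℝ) (c : Fin (T+1) → S → A → ℝ) (z0 : S → ℝ)
    (x : Fin (T+1) → S → A → ℝ) (hx : x ∈ Feas T P z0) :
    ∑ t, ∑ s, ∑ a, x t s a * c t s a = ∑ s, z0 s * Vval T P c 0 s +
      ∑ t, ∑ s, ∑ a, x t s a * (Qval T P c t s a - Vval T P c t s) := by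
  obtain ⟨-, h0, hs⟩ := hx
  have hs' : ∀ (t : Fin T) s, ∑ s', ∑ a, P t.succ s s' a * x t.castSucc s' a
      = ∑ a, x t.succ s a := fun t s => hs t.1 t.2 s
  have h1 : ∑ t, ∑ s, ∑ a, x t s a * Vval T P c t s = ∑ s, z0 s * Vval T P c 0 s +
      ∑ t : Fin T, ∑ s, ∑ a, x t.succ s a * Vval T P c t.succ s := by
    rw [Fin.sum_univ_succ]
    congr 1
    refine Finset.sum_congr rfl fun s _ => ?_
    rw [← Finset.sum_mul, h0]
  have h2 : ∑ t, ∑ s, ∑ a, x t s a * Qval T P c t s a = ∑ t, ∑ s, ∑ a, x t s a * c t s a +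
      ∑ t : Fin T, ∑ s, ∑ a, x t.succ s a * Vval T P c t.succ s := by
    rw [Fin.sum_univ_castSucc, Fin.sum_univ_castSucc (fun t => ∑ s, ∑ a, x t s a * c t s a)]
    simp only [Qval_last, Qval_castSucc, mul_add, Finset.sum_add_distrib]
    have : ∀ t : Fin T, ∑ s, ∑ a, x t.castSucc s a * ∑ s', P t.succ s' s a *
        Finset.univ.inf' Finset.univ_nonempty (Qval T P c t.succ s') =
        ∑ s, ∑ a, x t.succ s a * Vval T P c t.succ s := by
      intro t
      simp only [← Finset.sum_mul, ← hs']
      simp only [Finset.mul_sum, Finset.sum_mul]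
      conv_lhs => enter [2, a]; rw [Finset.sum_comm]
      rw [Finset.sum_comm]
      refine Finset.sum_congr rfl fun s' _ => ?_
      refine Finset.sum_congr rfl fun s _ => Finset.sum_congr rfl fun a _ => ?_
      simp only [Vval]; ring
    simp only [this]
    ring
  simp only [mul_sub, Finset.sum_sub_distrib]
  rw [h1, h2]; ring

lemma gap_nonneg {S A : Type*} [Fintype S] [Fintype A] [Nonempty A] (T : ℕ)
    (P : Fin (T+1) → S → S → A → ℝ) (c : Fin (T+1) → S → A → ℝ) (t s a) :
    0 ≤ Qval T P c t s a - Vval T P c t s :=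
  sub_nonneg.2 (Finset.inf'_le _ (Finset.mem_univ a))

lemma bellman_iff {S A : Type*} [Fintype S] [Fintype A] [Nonempty A] (T : ℕ)
    (P : Fin (T+1) → S → S → A → ℝ) (c : Fin (T+1) → S → A → ℝ)
    (x : Fin (T+1) → S → A → ℝ) (hx : ∀ t s a, 0 ≤ x t s a) :
    BellmanCond T P c x ↔
      ∑ t, ∑ s, ∑ a, x t s a * (Qval T P c t s a - Vval T P c t s) ≤ 0 := by
  have hn : ∀ t s a, 0 ≤ x t s a * (Qval T P c t s a - Vval T P c t s) :=
    fun t s a => mul_nonneg (hx t s a) (gap_nonneg T P c t s a)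
  constructor
  · intro h
    refine Finset.sum_nonpos fun t _ => Finset.sum_nonpos fun s _ =>
      Finset.sum_nonpos fun a _ => ?_
    rcases (hx t s a).eq_or_lt with h0 | h0
    · simp [← h0]
    · rw [h t s a h0]; simp [Vval]
  · intro h t s a hpos
    have hle : x t s a * (Qval T P c t s a - Vval T P c t s) ≤ 0 := by
      refine le_trans ?_ h
      refine le_trans (Finset.single_le_sum (fun a _ => hn t s a) (Finset.mem_univ a)) ?_
      refine le_trans (Finset.single_le_sum
        (f := fun s => ∑ a, x t s a * (Qval T P c t s a - Vval T P c t s))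
        (fun s _ => Finset.sum_nonneg fun a _ => hn t s a) (Finset.mem_univ s)) ?_
      exact Finset.single_le_sum
        (f := fun t => ∑ s, ∑ a, x t s a * (Qval T P c t s a - Vval T P c t s))
        (fun t _ => Finset.sum_nonneg fun s _ => Finset.sum_nonneg fun a _ => hn t s a)
        (Finset.mem_univ t)
    have h1 := gap_nonneg T P c t s a
    have h2 : Qval T P c t s a - Vval T P c t s = 0 := by
      by_contra hne
      exact absurd hle (not_le.2 (mul_pos hpos (lt_of_le_of_ne h1 (Ne.symm hne))))
    exact sub_eq_zero.1 h2

lemma exists_bellman {S A : Type*} [Fintype S] [Fintype A] [Nonempty A] [DecidableEq A] (T : ℕ)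
    (P : Fin (T+1) → S → S → A → ℝ) (hP : IsKernel T P) (c : Fin (T+1) → S → A → ℝ)
    (z0 : S → ℝ) (hz : ∀ s, 0 ≤ z0 s) :
    ∃ x ∈ Feas T P z0, BellmanCond T P c x := by
  have : ∀ t s, ∃ a, Vval T P c t s = Qval T P c t s a := by
    intro t s
    obtain ⟨a, -, ha⟩ := Finset.exists_mem_eq_inf' (Finset.univ_nonempty (α := A)) (Qval T P c t s)
    exact ⟨a, ha⟩
  choose π hπ using this
  let m : Fin (T+1) → S → ℝ := fun t => Fin.induction (motive := fun _ => S → ℝ) z0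
    (fun i f s => ∑ s', P i.succ s s' (π i.castSucc s') * f s') t
  have m0 : m 0 = z0 := rfl
  have ms : ∀ (i : Fin T) s, m i.succ s =
      ∑ s', P i.succ s s' (π i.castSucc s') * m i.castSucc s' := fun i s => by
    simp [m, Fin.induction_succ]
  have mn : ∀ t s, 0 ≤ m t s := by
    intro t
    induction t using Fin.induction with
    | zero => exact hz
    | succ i ih =>
      intro s
      rw [ms]
      exact Finset.sum_nonneg fun s' _ => mul_nonneg (hP.1 _ _ _ _) (ih s')
  refine ⟨fun t s a => if a = π t s then m t s else 0, ⟨?_, ?_, ?_⟩, ?_⟩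
  · intro t s a
    dsimp only
    split_ifs
    · exact mn t s
    · exact le_rfl
  · intro s
    simp [m0]
  · intro t ht s
    have := ms ⟨t, ht⟩ s
    simp only [mul_ite, mul_zero, Finset.sum_ite_eq', Finset.mem_univ, if_true]
    exact this.symm
  · intro t s a h
    have : a = π t s := by
      by_contra hne
      simp [hne] at h
    rw [this]
    exact (hπ t s).symm

lemma bellman_iff_opt {S A : Type*} [Fintype S] [Fintype A] [Nonempty A] [DecidableEq A] (T : ℕ)
    (P : Fin (T+1) → S → S → A → ℝ) (hP : IsKernel T P) (c : Fin (T+1) → S → A → ℝ)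
    (z0 : S → ℝ) (hz : ∀ s, 0 ≤ z0 s) (x : Fin (T+1) → S → A → ℝ) (hx : x ∈ Feas T P z0) :
    BellmanCond T P c x ↔ ∀ y ∈ Feas T P z0,
      ∑ t, ∑ s, ∑ a, x t s a * c t s a ≤ ∑ t, ∑ s, ∑ a, y t s a * c t s a := by
  constructor
  · intro h y hy
    rw [bellman_iff T P c x hx.1] at h
    rw [cost_identity T P c z0 x hx, cost_identity T P c z0 y hy]
    have : 0 ≤ ∑ t, ∑ s, ∑ a, y t s a * (Qval T P c t s a - Vval T P c t s) :=
      Finset.sum_nonneg fun t _ => Finset.sum_nonneg fun s _ => Finset.sum_nonneg fun a _ =>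
        mul_nonneg (hy.1 t s a) (gap_nonneg T P c t s a)
    linarith
  · intro h
    obtain ⟨y, hy, hb⟩ := exists_bellman T P hP c z0 hz
    have h1 := h y hy
    rw [bellman_iff T P c y hy.1] at hb
    rw [cost_identity T P c z0 x hx, cost_identity T P c z0 y hy] at h1
    rw [bellman_iff T P c x hx.1]
    linarith

lemma feas_convex {S A : Type*} [Fintype S] [Fintype A] (T : ℕ)
    (P : Fin (T+1) → S → S → A → ℝ) (z0 : S → ℝ) : Convex ℝ (Feas T P z0) := by
  intro x hx y hy α β hα hβ hαβ
  refine ⟨fun t s a => ?_, fun s => ?_, fun t ht s => ?_⟩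
  · have := hx.1 t s a
    have := hy.1 t s a
    simp only [Pi.add_apply, Pi.smul_apply, smul_eq_mul]
    positivity
  · simp only [Pi.add_apply, Pi.smul_apply, smul_eq_mul, Finset.sum_add_distrib, ← Finset.mul_sum,
      hx.2.1, hy.2.1]
    rw [← add_mul, hαβ, one_mul]
  · simp only [Pi.add_apply, Pi.smul_apply, smul_eq_mul, Finset.sum_add_distrib, ← Finset.mul_sum,
      mul_add, mul_left_comm _ α, mul_left_comm _ β, hx.2.2 t ht s, hy.2.2 t ht s]

lemma decompN {S A : Type*} [Fintype S] [Fintype A] [DecidableEq S] [DecidableEq A] (N T : ℕ)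
    (v : Fin N → Fin (T+1) → S → A → ℝ) :
    v = ∑ i, ∑ t, ∑ s, ∑ a, v i t s a • ebN N T i t s a := by
  funext i t s a
  simp only [Finset.sum_apply, Pi.smul_apply, smul_eq_mul]
  rw [Finset.sum_eq_single i, Finset.sum_eq_single t, Finset.sum_eq_single s,
    Finset.sum_eq_single a]
  · simp [ebN, eb]
  · intro b _ hb; simp [ebN, eb, hb.symm]
  · simp
  · intro b _ hb; simp [ebN, eb, hb.symm]
  · simp
  · intro b _ hb; simp [ebN, eb, hb.symm]
  · simp
  · intro b _ hb; simp [ebN, hb.symm]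
  · simp

/-- For an MDP congestion game whose cost vector ξ is C¹ with symmetric
positive definite Jacobian on a convex open set U ⊇ D = ∏ᵢ 𝒳(Pⁱ,z₀ⁱ), and F a potential
function (∂F/∂xⁱ(t,s,a) = ℓⁱ(t,s,a) on U): x̂ ∈ D globally minimizes F over D iff x̂ is a
Nash equilibrium, i.e. each x̂ⁱ satisfies the Bellman condition for cost ℓⁱ(·)(x̂). -/
theorem stmt7 {S A : Type*} [Fintype S] [Fintype A] [Nonempty S] [Nonempty A]
    [DecidableEq S] [DecidableEq A] {T N : ℕ}
    (P : Fin N → Fin (T+1) → S → S → A → ℝ) (hP : ∀ i, IsKernel T (P i))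
    (z0 : Fin N → S → ℝ) (hz0 : ∀ i s, 0 ≤ z0 i s)
    (ξ : (Fin N → Fin (T+1) → S → A → ℝ) → (Fin N → Fin (T+1) → S → A → ℝ))
    (U : Set (Fin N → Fin (T+1) → S → A → ℝ)) (hUopen : IsOpen U) (hUconv : Convex ℝ U)
    (hDU : {x | ∀ i, x i ∈ Feas T (P i) (z0 i)} ⊆ U)
    (hC1 : ContDiffOn ℝ 1 ξ U)
    (hsymm : ∀ x ∈ U, ∀ i t s a, ∀ j t' s' a',
      fderiv ℝ ξ x (ebN N T j t' s' a') i t s a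
        = fderiv ℝ ξ x (ebN N T i t s a) j t' s' a')
    (hpd : ∀ x ∈ U, ∀ v : Fin N → Fin (T+1) → S → A → ℝ, v ≠ 0 →
      0 < ∑ i, ∑ t, ∑ s, ∑ a, v i t s a * fderiv ℝ ξ x v i t s a)
    (F : (Fin N → Fin (T+1) → S → A → ℝ) → ℝ)
    (hFdiff : ∀ x ∈ U, DifferentiableAt ℝ F x)
    (hpot : ∀ x ∈ U, ∀ i t s a, fderiv ℝ F x (ebN N T i t s a) = ξ x i t s a)
    (xhat : Fin N → Fin (T+1) → S → A → ℝ)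
    (hxhatD : ∀ i, xhat i ∈ Feas T (P i) (z0 i)) :
    (∀ x : Fin N → Fin (T+1) → S → A → ℝ,
        (∀ i, x i ∈ Feas T (P i) (z0 i)) → F xhat ≤ F x) ↔
      ∀ i, BellmanCond T (P i) (fun t s a => ξ xhat i t s a) (xhat i) := by
  have hF : ∀ x ∈ U, ∀ v, fderiv ℝ F x v = ∑ i, ∑ t, ∑ s, ∑ a, v i t s a * ξ x i t s a := by
    intro x hx v
    conv_lhs => rw [decompN N T v]
    simp only [map_sum, map_smul, hpot x hx, smul_eq_mul]
  have hxU : xhat ∈ U := hDU hxhatD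
  have hconv : Convex ℝ {x : Fin N → Fin (T+1) → S → A → ℝ | ∀ i, x i ∈ Feas T (P i) (z0 i)} := by
    intro x hx y hy α β hα hβ hαβ i
    exact feas_convex T (P i) (z0 i) (hx i) (hy i) hα hβ hαβ
  constructor
  · intro hmin i
    rw [bellman_iff_opt T (P i) (hP i) _ (z0 i) (hz0 i) _ (hxhatD i)]
    intro y hy
    have hxD : ∀ j, Function.update xhat i y j ∈ Feas T (P j) (z0 j) := by
      intro j
      by_cases h : j = i
      · subst h; simpa using hy
      · simpa [h] using hxhatD j
    have hloc : IsLocalMinOn F {x | ∀ i, x i ∈ Feas T (P i) (z0 i)} xhat :=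
      IsMinOn.localize (fun x hx => hmin x hx)
    have h0 := hloc.hasFDerivWithinAt_nonneg (hFdiff _ hxU).hasFDerivAt.hasFDerivWithinAt
      (sub_mem_posTangentConeAt_of_segment_subset (hconv.segment_subset hxhatD hxD))
    rw [hF _ hxU, Finset.sum_eq_single i] at h0
    · simp only [Pi.sub_apply, Function.update_self, sub_mul, Finset.sum_sub_distrib] at h0
      linarith
    · intro j _ hj
      simp [hj]
    · simp
  · intro hB x hx
    set d := x - xhat with hd
    have hVI : 0 ≤ ∑ i, ∑ t, ∑ s, ∑ a, d i t s a * ξ xhat i t s a := by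
      refine Finset.sum_nonneg fun i _ => ?_
      have := (bellman_iff_opt T (P i) (hP i) _ (z0 i) (hz0 i) _ (hxhatD i)).1 (hB i) (x i) (hx i)
      simp only [hd, Pi.sub_apply, sub_mul, Finset.sum_sub_distrib]
      linarith
    have hγU : ∀ τ ∈ Set.Icc (0:ℝ) 1, xhat + τ • d ∈ U := by
      intro τ hτ
      exact hDU (hconv.add_smul_sub_mem hxhatD hx hτ)
    have hγ : ∀ τ : ℝ, HasDerivAt (fun τ : ℝ => xhat + τ • d) d τ := by
      intro τ
      simpa using ((hasDerivAt_id τ).smul_const d).const_add xhat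
    have hg : ∀ τ ∈ Set.Icc (0:ℝ) 1, HasDerivAt (fun τ : ℝ => F (xhat + τ • d))
        (∑ i, ∑ t, ∑ s, ∑ a, d i t s a * ξ (xhat + τ • d) i t s a) τ := by
      intro τ hτ
      have := (hFdiff _ (hγU τ hτ)).hasFDerivAt.comp_hasDerivAt τ (hγ τ)
      rw [hF _ (hγU τ hτ)] at this
      exact this
    have hh : ∀ τ ∈ Set.Icc (0:ℝ) 1, HasDerivAt
        (fun τ : ℝ => ∑ i, ∑ t, ∑ s, ∑ a, d i t s a * ξ (xhat + τ • d) i t s a)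
        (∑ i, ∑ t, ∑ s, ∑ a, d i t s a * fderiv ℝ ξ (xhat + τ • d) d i t s a) τ := by
      intro τ hτ
      have hdξ : DifferentiableAt ℝ ξ (xhat + τ • d) :=
        (hC1.differentiableOn (by simp)).differentiableAt (hUopen.mem_nhds (hγU τ hτ))
      have h1 : HasDerivAt (fun τ : ℝ => ξ (xhat + τ • d)) (fderiv ℝ ξ (xhat + τ • d) d) τ :=
        hdξ.hasFDerivAt.comp_hasDerivAt τ (hγ τ)
      refine HasDerivAt.fun_sum fun i _ => HasDerivAt.fun_sum fun t _ =>
        HasDerivAt.fun_sum fun s _ => HasDerivAt.fun_sum fun a _ => HasDerivAt.const_mul _ ?_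
      exact hasDerivAt_pi.1 (hasDerivAt_pi.1 (hasDerivAt_pi.1 (hasDerivAt_pi.1 h1 i) t) s) a
    have hmono : MonotoneOn
        (fun τ : ℝ => ∑ i, ∑ t, ∑ s, ∑ a, d i t s a * ξ (xhat + τ • d) i t s a)
        (Set.Icc 0 1) := by
      refine monotoneOn_of_deriv_nonneg (convex_Icc 0 1)
        (fun τ hτ => (hh τ hτ).continuousAt.continuousWithinAt)
        (fun τ hτ => (hh τ (interior_subset hτ)).differentiableAt.differentiableWithinAt) ?_
      intro τ hτ
      have hτ' := interior_subset hτ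
      rw [(hh τ hτ').deriv]
      by_cases h0 : d = 0
      · simp [h0]
      · exact (hpd _ (hγU τ hτ') d h0).le
    have hmonoF : MonotoneOn (fun τ : ℝ => F (xhat + τ • d)) (Set.Icc 0 1) := by
      refine monotoneOn_of_deriv_nonneg (convex_Icc 0 1)
        (fun τ hτ => (hg τ hτ).continuousAt.continuousWithinAt)
        (fun τ hτ => (hg τ (interior_subset hτ)).differentiableAt.differentiableWithinAt) ?_
      intro τ hτ
      have hτ' := interior_subset hτ
      rw [(hg τ hτ').deriv]
      have := hmono (Set.left_mem_Icc.2 zero_le_one) hτ' hτ'.1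
      simp only [zero_smul, add_zero] at this
      exact hVI.trans this
    have := hmonoF (Set.left_mem_Icc.2 zero_le_one) (Set.right_mem_Icc.2 zero_le_one) zero_le_one
    simpa [hd] using this
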